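/- Let α > 0 and k > 2/α be real, let μ ∈ ℝ, θ₂ ≥ 0, a ≥ 0, and 0 < h ≤ Y be reals with a·h^{-α} < 1. Then ∫_h^Y y^{1-kα} (1 + a y^{-α})^{-(k+μ)} · ₁F₁(k+μ; μ; θ₂/(1 + a y^{-α})) dy = G(Y) - G(h), where G(y) = (y^{2-kα}/(2-kα)) · Ψ₁(k+μ, k - 2/α; μ, k - 2/α + 1; θ₂, -a y^{-α}). -/

import Mathlib

open MeasureTheory Real Nat Polynomial

/-- The confluent hypergeometric function `₁F₁(a; b; x)`, defined by its everywhere-convergent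
series `∑_j ((a)_j/(b)_j) x^j / j!`, where `(a)_j` is the ascending Pochhammer symbol. -/
noncomputable def hyp1F1 (a b x : ℝ) : ℝ :=
  ∑' j : ℕ, ((ascPochhammer ℝ j).eval a / (ascPochhammer ℝ j).eval b) * x ^ j / (j ! : ℝ)

/-- The Humbert series `Ψ₁(a, b; c, d; x, y)`, defined by the double series
`∑_j ∑_l ((a)_{j+l} (b)_l / ((c)_j (d)_l)) x^j y^l / (j! l!)`, convergent for arbitrary `x`
and `|y| < 1`. -/
noncomputable def humbertPsi1 (a b c d x y : ℝ) : ℝ :=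
  ∑' j : ℕ, ∑' l : ℕ,
    ((ascPochhammer ℝ (j + l)).eval a * (ascPochhammer ℝ l).eval b /
      ((ascPochhammer ℝ j).eval c * (ascPochhammer ℝ l).eval d)) *
      x ^ j * y ^ l / ((j ! : ℝ) * (l ! : ℝ))

lemma aux_congr {f g : ℕ → ℝ} {c : ℝ} (hg : HasSum g c) (h : ∀ l, f l = g l) : HasSum f c := by
  rwa [funext h]

lemma aux_binom (s x : ℝ) (hx : |x| < 1) :
    HasSum (fun l : ℕ => (ascPochhammer ℝ l).eval s / (l ! : ℝ) * x ^ l) ((1 - x) ^ (-s)) := by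
  have H := (Real.one_div_one_sub_rpow_hasFPowerSeriesOnBall_zero s).hasSum (y := x)
    (by simpa [enorm_eq_nnnorm, ← NNReal.coe_lt_coe] using hx)
  have h1 : 0 < 1 - x := by have := (abs_lt.1 hx).2; linarith
  rw [Real.rpow_neg h1.le]
  simp only [zero_add, one_div] at H
  refine aux_congr H fun l => ?_
  simp only [FormalMultilinearSeries.ofScalars_apply_eq, smul_eq_mul]
  congr 1
  rw [div_eq_iff (by positivity), Ring.choose, ← Polynomial.ascPochhammer_smeval_eq_eval,
    ← Ring.factorial_nsmul_multichoose_eq_ascPochhammer, nsmul_eq_mul, mul_comm]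
  congr 2
  ring

lemma aux_split (A : ℝ) (j l : ℕ) : (ascPochhammer ℝ (j + l)).eval A =
    (ascPochhammer ℝ j).eval A * (ascPochhammer ℝ l).eval (A + j) := by
  rw [← ascPochhammer_mul]; simp

lemma aux_abs (s t : ℝ) (h : |s| ≤ t) (l : ℕ) :
    |(ascPochhammer ℝ l).eval s| ≤ (ascPochhammer ℝ l).eval t := by
  induction l with
  | zero => simp
  | succ n ih =>
    rw [ascPochhammer_succ_eval, ascPochhammer_succ_eval, abs_mul]
    have h2 : |s + n| ≤ t + n := (abs_add_le _ _).trans (by simpa using h)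
    exact mul_le_mul ih h2 (abs_nonneg _) ((abs_nonneg _).trans ih)

lemma aux_ratio (b : ℝ) (hb : 0 < b) (l : ℕ) :
    (ascPochhammer ℝ l).eval b / (ascPochhammer ℝ l).eval (b + 1) = b / (b + l) := by
  have h1 := ascPochhammer_succ_eval l b
  rw [ascPochhammer_succ_left] at h1
  simp only [eval_mul, eval_X, eval_comp, eval_add, eval_one] at h1
  have h2 : 0 < (ascPochhammer ℝ l).eval (b + 1) := ascPochhammer_pos l _ (by linarith)
  have h3 : 0 < b + l := by positivity
  rw [div_eq_div_iff h2.ne' h3.ne']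
  linarith

lemma aux_summable (A μ x : ℝ) : Summable (fun j : ℕ =>
    |((ascPochhammer ℝ j).eval A / (ascPochhammer ℝ j).eval μ) * x ^ j / (j ! : ℝ)|) := by
  apply Summable.abs
  apply summable_of_ratio_norm_eventually_le (r := 1 / 2) (by norm_num)
  have hlim : Filter.Tendsto (fun n : ℕ => ((A + n) / (μ + n)) * (x / ((n : ℝ) + 1)))
      Filter.atTop (nhds (1 * 0)) := by
    apply Filter.Tendsto.mul
    · have := tendsto_add_mul_div_add_mul_atTop_nhds A μ (1 : ℝ) (d := (1 : ℝ)) one_ne_zero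
      simpa using this
    · exact Filter.Tendsto.div_atTop tendsto_const_nhds
        (Filter.tendsto_atTop_add_const_right _ _ tendsto_natCast_atTop_atTop)
  rw [mul_zero] at hlim
  have := (hlim.norm).eventually
    (show ∀ᶠ z in nhds ‖(0 : ℝ)‖, z ≤ 1 / 2 from Iic_mem_nhds (by norm_num))
  filter_upwards [this] with n hn
  have e : (ascPochhammer ℝ (n + 1)).eval A / (ascPochhammer ℝ (n + 1)).eval μ * x ^ (n + 1) /
      ((n + 1)! : ℝ) = (((A + n) / (μ + n)) * (x / ((n : ℝ) + 1))) *
      ((ascPochhammer ℝ n).eval A / (ascPochhammer ℝ n).eval μ * x ^ n / (n ! : ℝ)) := by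
    rw [ascPochhammer_succ_eval, ascPochhammer_succ_eval, Nat.factorial_succ]
    push_cast
    simp only [div_eq_mul_inv, mul_inv, pow_succ]
    ring
  rw [e, norm_mul]
  exact mul_le_mul_of_nonneg_right hn (norm_nonneg _)

lemma aux_S_bound (s t b z r : ℝ) (hst : |s| ≤ t) (hb : 0 < b) (hz : 0 ≤ z) (hzr : z ≤ r)
    (hr : r < 1) :
    Summable (fun l : ℕ => (ascPochhammer ℝ l).eval s / (l ! : ℝ) * (b / (b + l)) * (-z) ^ l) ∧
    |∑' l : ℕ, (ascPochhammer ℝ l).eval s / (l ! : ℝ) * (b / (b + l)) * (-z) ^ l|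
      ≤ (1 - r) ^ (-t) := by
  have H := aux_binom t r (by rw [abs_lt]; constructor <;> linarith)
  have hle : ∀ l : ℕ, ‖(ascPochhammer ℝ l).eval s / (l ! : ℝ) * (b / (b + l)) * (-z) ^ l‖ ≤
      (ascPochhammer ℝ l).eval t / (l ! : ℝ) * r ^ l := by
    intro l
    have h0 := aux_abs s t hst l
    rw [Real.norm_eq_abs, abs_mul, abs_mul, abs_div, abs_pow, abs_neg, abs_of_nonneg hz,
      abs_of_nonneg (show (0 : ℝ) ≤ (l ! : ℝ) by positivity),
      abs_of_nonneg (show (0 : ℝ) ≤ b / (b + l) by positivity)]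
    have h1 : b / (b + l) ≤ 1 := by
      rw [div_le_one (by positivity)]; simp
    have h2 : z ^ l ≤ r ^ l := pow_le_pow_left₀ hz hzr l
    have h3 : (0:ℝ) ≤ (ascPochhammer ℝ l).eval t / (l ! : ℝ) :=
      div_nonneg ((abs_nonneg _).trans h0) (by positivity)
    apply mul_le_mul _ h2 (by positivity) h3
    calc _ ≤ (ascPochhammer ℝ l).eval t / (l ! : ℝ) * 1 := by
          apply mul_le_mul _ h1 (by positivity) h3
          gcongr
      _ = _ := mul_one _
  refine ⟨Summable.of_norm_bounded H.summable hle, ?_⟩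
  exact tsum_of_norm_bounded H hle

lemma aux_z (α a h y : ℝ) (hα : 0 < α) (ha : 0 ≤ a) (hh : 0 < h) (hy : h ≤ y) :
    0 ≤ a * y ^ (-α) ∧ a * y ^ (-α) ≤ a * h ^ (-α) := by
  have : 0 < y := hh.trans_le hy
  refine ⟨by positivity, mul_le_mul_of_nonneg_left ?_ ha⟩
  exact Real.rpow_le_rpow_of_nonpos hh hy (by linarith)

/-- the inner antiderivative -/
noncomputable def auxE (α k a s y : ℝ) : ℝ :=
  (y ^ (2 - k * α) / (2 - k * α)) *
    ∑' l : ℕ, (ascPochhammer ℝ l).eval s / (l ! : ℝ) *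
      ((k - 2 / α) / ((k - 2 / α) + l)) * (-(a * y ^ (-α))) ^ l

lemma aux_cont (p h Y : ℝ) (hh : 0 < h) (hhY : h ≤ Y) :
    ContinuousOn (fun y : ℝ => y ^ p) (Set.uIcc h Y) := by
  rw [Set.uIcc_of_le hhY]
  intro y hy
  exact (Real.continuousAt_rpow_const y p (Or.inl (hh.trans_le hy.1).ne')).continuousWithinAt

lemma aux_inner (α k a h Y s : ℝ) (hα : 0 < α) (hk : 2 / α < k) (ha : 0 ≤ a)
    (hh : 0 < h) (hhY : h ≤ Y) (hsmall : a * h ^ (-α) < 1) :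
    ∫ y in h..Y, y ^ (1 - k * α) * (1 + a * y ^ (-α)) ^ (-s) =
      auxE α k a s Y - auxE α k a s h := by
  have hb : 0 < k - 2 / α := by linarith
  have hYp : 0 < Y := hh.trans_le hhY
  have h2k : 2 - k * α = -(α * (k - 2 / α)) := by field_simp; ring
  have h2ne : 2 - k * α ≠ 0 := by rw [h2k]; exact neg_ne_zero.2 (by positivity)
  have hr0 : 0 ≤ a * h ^ (-α) := (aux_z α a h h hα ha hh le_rfl).1
  have HB := aux_binom |s| (a * h ^ (-α)) (by rwa [abs_of_nonneg hr0])
  have hmem : ∀ t ∈ Set.uIoc h Y, h ≤ t := fun t ht => by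
    rw [Set.uIoc_of_le hhY] at ht; exact ht.1.le
  have key := intervalIntegral.hasSum_integral_of_dominated_convergence (μ := volume)
    (a := h) (b := Y)
    (F := fun (l : ℕ) (y : ℝ) => y ^ (1 - k * α) *
      ((ascPochhammer ℝ l).eval s / (l ! : ℝ) * (-(a * y ^ (-α))) ^ l))
    (f := fun y => y ^ (1 - k * α) * (1 + a * y ^ (-α)) ^ (-s))
    (fun l y => y ^ (1 - k * α) *
      ((ascPochhammer ℝ l).eval |s| / (l ! : ℝ) * (a * h ^ (-α)) ^ l))
    ?_ ?_ ?_ ?_ ?_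
  · have hterm : ∀ l : ℕ, (∫ y in h..Y, y ^ (1 - k * α) *
        ((ascPochhammer ℝ l).eval s / (l ! : ℝ) * (-(a * y ^ (-α))) ^ l)) =
        (Y ^ (2 - k * α) / (2 - k * α)) * ((ascPochhammer ℝ l).eval s / (l ! : ℝ) *
          ((k - 2 / α) / ((k - 2 / α) + l)) * (-(a * Y ^ (-α))) ^ l) -
        (h ^ (2 - k * α) / (2 - k * α)) * ((ascPochhammer ℝ l).eval s / (l ! : ℝ) *
          ((k - 2 / α) / ((k - 2 / α) + l)) * (-(a * h ^ (-α))) ^ l) := by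
      intro l
      have hbl : 0 < (k - 2 / α) + l := by positivity
      have hpow : ∀ y : ℝ, 0 < y → ∀ q : ℝ, y ^ q * (y ^ (-α)) ^ l = y ^ (q - α * l) := by
        intro y hy q
        rw [← Real.rpow_natCast (y ^ (-α)), ← Real.rpow_mul hy.le, ← Real.rpow_add hy]
        ring_nf
      have e1 : (∫ y in h..Y, y ^ (1 - k * α) *
        ((ascPochhammer ℝ l).eval s / (l ! : ℝ) * (-(a * y ^ (-α))) ^ l)) =
        ∫ y in h..Y, ((ascPochhammer ℝ l).eval s / (l ! : ℝ) * (-a) ^ l) *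
          y ^ (1 - k * α - α * l) := by
        apply intervalIntegral.integral_congr
        intro y hy
        rw [Set.uIcc_of_le hhY] at hy
        simp only
        rw [← hpow y (hh.trans_le hy.1), ← neg_mul, mul_pow]
        ring
      have e3 : 1 - k * α - α * l + 1 = -(α * ((k - 2 / α) + l)) := by field_simp; ring
      have e4 : 1 - k * α - α * l + 1 = 2 - k * α - α * l := by ring
      have e5 : -(α * ((k - 2 / α) + l)) ≠ 0 := neg_ne_zero.2 (by positivity)
      rw [e1, intervalIntegral.integral_const_mul, integral_rpow]
      · rw [e4, ← hpow Y hYp, ← hpow h hh, ← e4, e3, ← neg_mul a, ← neg_mul a, mul_pow, mul_pow]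
        have e6 : (k - 2 / α) / ((k - 2 / α) + l) / (2 - k * α) =
            1 / (-(α * ((k - 2 / α) + l))) := by
          rw [h2k, div_div, div_eq_div_iff (mul_ne_zero hbl.ne' (by rw [← h2k]; exact h2ne)) e5]
          ring
        calc _ = (ascPochhammer ℝ l).eval s / (l ! : ℝ) * (-a) ^ l *
              (Y ^ (2 - k * α) * (Y ^ (-α)) ^ l - h ^ (2 - k * α) * (h ^ (-α)) ^ l) *
              (1 / (-(α * ((k - 2 / α) + l)))) := by ring
          _ = _ := by rw [← e6]; ring
      · right
        refine ⟨fun hc => e5 ?_, ?_⟩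
        · rw [← e3, hc]; ring
        · rw [Set.uIcc_of_le hhY]
          intro hc
          exact absurd hc.1 (not_le.2 hh)
    simp_rw [hterm] at key
    refine key.unique ?_
    unfold auxE
    have zY := aux_z α a h Y hα ha hh hhY
    exact ((aux_S_bound s |s| _ _ _ le_rfl hb zY.1 zY.2 hsmall).1.hasSum.mul_left _).sub
      ((aux_S_bound s |s| _ _ _ le_rfl hb hr0 le_rfl hsmall).1.hasSum.mul_left _)
  · intro l
    refine ContinuousOn.aestronglyMeasurable ?_ measurableSet_uIoc
    refine ContinuousOn.mono ?_ Set.uIoc_subset_uIcc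
    exact (aux_cont _ h Y hh hhY).mul (continuousOn_const.mul
      ((continuousOn_const.mul (aux_cont _ h Y hh hhY)).neg.pow l))
  · intro l
    refine Filter.Eventually.of_forall fun y hy => ?_
    have hy' := hmem y hy
    have hy0 : 0 < y := hh.trans_le hy'
    have z := aux_z α a h y hα ha hh hy'
    rw [norm_mul, norm_mul, Real.norm_of_nonneg (Real.rpow_nonneg hy0.le _), norm_div, norm_pow,
      norm_neg, Real.norm_of_nonneg z.1, Real.norm_of_nonneg (show (0:ℝ) ≤ (l ! : ℝ) by positivity)]
    have h0 := aux_abs s |s| le_rfl l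
    have h3 : (0:ℝ) ≤ (ascPochhammer ℝ l).eval |s| / (l ! : ℝ) :=
      div_nonneg ((abs_nonneg _).trans h0) (by positivity)
    apply mul_le_mul_of_nonneg_left _ (Real.rpow_nonneg hy0.le _)
    apply mul_le_mul _ (pow_le_pow_left₀ z.1 z.2 l) (pow_nonneg z.1 l) h3
    rw [Real.norm_eq_abs]
    gcongr
  · exact Filter.Eventually.of_forall fun y hy => HB.summable.mul_left _
  · simp_rw [tsum_mul_left]
    exact ((aux_cont _ h Y hh hhY).mul continuousOn_const).intervalIntegrable
  · refine Filter.Eventually.of_forall fun y hy => ?_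
    have z := aux_z α a h y hα ha hh (hmem y hy)
    have := aux_binom s (-(a * y ^ (-α))) (by
      rw [abs_neg, abs_of_nonneg z.1]; linarith [z.2])
    rw [sub_neg_eq_add] at this
    exact this.mul_left _

lemma aux_E_summable (α k μ θ a h y : ℝ) (hα : 0 < α) (hk : 2 / α < k) (ha : 0 ≤ a)
    (hh : 0 < h) (hhy : h ≤ y) (hsmall : a * h ^ (-α) < 1) :
    Summable (fun j : ℕ => ((ascPochhammer ℝ j).eval (k + μ) / (ascPochhammer ℝ j).eval μ) *
      θ ^ j / (j ! : ℝ) * auxE α k a (k + μ + j) y) := by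
  have hb : 0 < k - 2 / α := by linarith
  have z := aux_z α a h y hα ha hh hhy
  set r := a * h ^ (-α) with hr
  have hr1 : 0 < 1 - r := by linarith
  have S := (aux_summable (k + μ) μ (θ * (1 - r)⁻¹)).mul_left
    (|y ^ (2 - k * α) / (2 - k * α)| * (1 - r) ^ (-|k + μ|))
  refine Summable.of_norm_bounded S fun j => ?_
  have B := (aux_S_bound (k + μ + j) (|k + μ| + j) _ _ _
    ((abs_add_le _ _).trans (by simp)) hb z.1 z.2 hsmall).2
  rw [Real.norm_eq_abs, auxE, abs_mul, abs_mul (y ^ (2 - k * α) / (2 - k * α)), mul_pow]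
  have e : (1 - r) ^ (-(|k + μ| + j)) = (1 - r) ^ (-|k + μ|) * ((1 - r)⁻¹) ^ j := by
    rw [neg_add, Real.rpow_add hr1, Real.rpow_neg hr1.le (j : ℝ), Real.rpow_natCast, inv_pow]
  rw [e] at B
  calc _ ≤ |(ascPochhammer ℝ j).eval (k + μ) / (ascPochhammer ℝ j).eval μ * θ ^ j / (j ! : ℝ)| *
        (|y ^ (2 - k * α) / (2 - k * α)| * ((1 - r) ^ (-|k + μ|) * ((1 - r)⁻¹) ^ j)) := by
        gcongr
    _ = _ := by
        have : (ascPochhammer ℝ j).eval (k + μ) / (ascPochhammer ℝ j).eval μ *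
          (θ ^ j * (1 - r)⁻¹ ^ j) / (j ! : ℝ) = (ascPochhammer ℝ j).eval (k + μ) /
          (ascPochhammer ℝ j).eval μ * θ ^ j / (j ! : ℝ) * (1 - r)⁻¹ ^ j := by ring
        rw [this, abs_mul _ ((1 - r)⁻¹ ^ j), abs_of_nonneg (show 0 ≤ (1 - r)⁻¹ ^ j by positivity)]
        ring

lemma aux_G (α k μ θ a y : ℝ) (hk : 2 / α < k) :
    (y ^ (2 - k * α) / (2 - k * α)) *
        humbertPsi1 (k + μ) (k - 2 / α) μ (k - 2 / α + 1) θ (-a * y ^ (-α)) =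
    ∑' j : ℕ, ((ascPochhammer ℝ j).eval (k + μ) / (ascPochhammer ℝ j).eval μ) *
      θ ^ j / (j ! : ℝ) * auxE α k a (k + μ + j) y := by
  rw [humbertPsi1, ← tsum_mul_left]
  refine tsum_congr fun j => ?_
  rw [auxE, ← tsum_mul_left, ← tsum_mul_left, ← tsum_mul_left]
  refine tsum_congr fun l => ?_
  rw [← aux_ratio _ (by linarith) l, aux_split, neg_mul]
  simp only [div_eq_mul_inv, mul_inv]
  ring

/-- **Corollary 1** (specialization of Lemma 2 to a receiver at the center of a disk): the
distance integral admits a closed form in terms of the Humbert `Ψ₁` series. -/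
theorem integral_hyp1F1_eq_humbertPsi1
    (α k μ θ₂ a h Y : ℝ) (hα : 0 < α) (hk : 2 / α < k) (hθ₂ : 0 ≤ θ₂) (ha : 0 ≤ a)
    (hh : 0 < h) (hhY : h ≤ Y) (hsmall : a * h ^ (-α) < 1)
    (G : ℝ → ℝ)
    (hG : ∀ y : ℝ, G y =
      (y ^ (2 - k * α) / (2 - k * α)) *
        humbertPsi1 (k + μ) (k - 2 / α) μ (k - 2 / α + 1) θ₂ (-a * y ^ (-α))) :
    ∫ y in h..Y,
        y ^ (1 - k * α) * (1 + a * y ^ (-α)) ^ (-(k + μ)) *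
          hyp1F1 (k + μ) μ (θ₂ / (1 + a * y ^ (-α))) = G Y - G h := by
  have hmem : ∀ t ∈ Set.uIoc h Y, h ≤ t := fun t ht => by
    rw [Set.uIoc_of_le hhY] at ht; exact ht.1.le
  have hbase : ContinuousOn (fun y : ℝ => 1 + a * y ^ (-α)) (Set.uIcc h Y) :=
    continuousOn_const.add (continuousOn_const.mul (aux_cont _ h Y hh hhY))
  have hpos : ∀ y, h ≤ y → 0 < 1 + a * y ^ (-α) := fun y hy => by
    linarith [(aux_z α a h y hα ha hh hy).1]
  have key := intervalIntegral.hasSum_integral_of_dominated_convergence (μ := volume)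
    (a := h) (b := Y)
    (F := fun (j : ℕ) (y : ℝ) =>
      ((ascPochhammer ℝ j).eval (k + μ) / (ascPochhammer ℝ j).eval μ) * θ₂ ^ j / (j ! : ℝ) *
      (y ^ (1 - k * α) * (1 + a * y ^ (-α)) ^ (-(k + μ + j))))
    (f := fun y => y ^ (1 - k * α) * (1 + a * y ^ (-α)) ^ (-(k + μ)) *
          hyp1F1 (k + μ) μ (θ₂ / (1 + a * y ^ (-α))))
    (fun j y =>
      |((ascPochhammer ℝ j).eval (k + μ) / (ascPochhammer ℝ j).eval μ) * θ₂ ^ j / (j ! : ℝ)| *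
      (y ^ (1 - k * α) * (1 + a * y ^ (-α)) ^ (-(k + μ))))
    ?_ ?_ ?_ ?_ ?_
  · simp_rw [intervalIntegral.integral_const_mul,
      aux_inner α k a h Y _ hα hk ha hh hhY hsmall, mul_sub] at key
    refine key.unique ?_
    rw [hG, hG, aux_G _ _ _ _ _ _ hk, aux_G _ _ _ _ _ _ hk]
    exact (aux_E_summable α k μ θ₂ a h Y hα hk ha hh hhY hsmall).hasSum.sub
      (aux_E_summable α k μ θ₂ a h h hα hk ha hh le_rfl hsmall).hasSum
  · intro j
    refine ContinuousOn.aestronglyMeasurable ?_ measurableSet_uIoc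
    refine ContinuousOn.mono ?_ Set.uIoc_subset_uIcc
    refine continuousOn_const.mul ((aux_cont _ h Y hh hhY).mul (hbase.rpow_const ?_))
    intro y hy
    rw [Set.uIcc_of_le hhY] at hy
    exact Or.inl (hpos y hy.1).ne'
  · intro j
    refine Filter.Eventually.of_forall fun y hy => ?_
    have hy' := hmem y hy
    have hy0 : 0 < y := hh.trans_le hy'
    have hp := hpos y hy'
    rw [norm_mul, Real.norm_eq_abs, Real.norm_of_nonneg (by positivity)]
    apply mul_le_mul_of_nonneg_left _ (abs_nonneg _)
    apply mul_le_mul_of_nonneg_left _ (Real.rpow_nonneg hy0.le _)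
    apply Real.rpow_le_rpow_of_exponent_le
    · linarith [(aux_z α a h y hα ha hh hy').1]
    · linarith [(Nat.cast_nonneg j : (0:ℝ) ≤ j)]
  · exact Filter.Eventually.of_forall fun y hy =>
      (aux_summable (k + μ) μ θ₂).mul_right _
  · simp_rw [tsum_mul_right]
    refine ContinuousOn.intervalIntegrable ?_
    refine continuousOn_const.mul ((aux_cont _ h Y hh hhY).mul (hbase.rpow_const ?_))
    intro y hy
    rw [Set.uIcc_of_le hhY] at hy
    exact Or.inl (hpos y hy.1).ne'
  · refine Filter.Eventually.of_forall fun y hy => ?_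
    have hp := hpos y (hmem y hy)
    have S := (aux_summable (k + μ) μ (θ₂ / (1 + a * y ^ (-α)))).of_abs.hasSum.mul_left
      (y ^ (1 - k * α) * (1 + a * y ^ (-α)) ^ (-(k + μ)))
    rw [hyp1F1]
    refine aux_congr S fun j => ?_
    rw [neg_add, Real.rpow_add hp, Real.rpow_neg hp.le (j : ℝ), Real.rpow_natCast, div_pow]
    simp only [div_eq_mul_inv]
    ring
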